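/- arXiv:2002.09186 — 2 statements merged into one kernel-verified Lean document; each statement's English description precedes it below -/
import Mathlib

section
/- For every affine map f from the 6-dimensional simplex on 7 vertices to R^2, where the 7 vertices are colored with color classes A = {a1,a2}, B = {b1,b2}, C = {c1,c2}, D = {d}, there exist four rainbow subsets Δ1, Δ2, Δ3, Δ4 of the vertex set (each containing at most one vertex of each color) such that the convex hulls of the four images f(Δ1), ..., f(Δ4) have a common point, each of a1, b1, c1, d appears in exactly one of the Δi, and each of a2, b2, c2 appears in exactly two of the Δi. -/
open scoped Classical

/-- Vertices `0,1` have color `A`, `2,3` color `B`, `4,5` color `C`, `6` color `D`.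
`a1 = 0, a2 = 1, b1 = 2, b2 = 3, c1 = 4, c2 = 5, d = 6`. -/
def colorClass7 : Fin 4 → Finset (Fin 7)
  | 0 => {0, 1}
  | 1 => {2, 3}
  | 2 => {4, 5}
  | 3 => {6}


namespace BU

abbrev E4 := Fin 4 → ℝ

abbrev Co := List E4 → ZMod 2

/-- coboundary -/
def d : Co → Co
  | _, [] => 0
  | φ, v :: w => φ w + d (fun u => φ (v :: u)) w

noncomputable def bary (w : List E4) : E4 := (1 / (w.length : ℝ)) • w.sum

/-- pull-back of a cochain along barycentric subdivision, on words of length `n` -/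
noncomputable def T : ℕ → Co → Co
  | 0, φ, _ => φ []
  | n + 1, φ, w => d (T n (fun u => φ (bary w :: u))) w

theorem z2 (a : ZMod 2) : a + a = 0 := CharTwo.add_self_eq_zero a

theorem d_add (φ ψ : Co) (w) : d (fun u => φ u + ψ u) w = d φ w + d ψ w := by
  induction w generalizing φ ψ with
  | nil => simp [d]
  | cons v w ih => simp only [d, ih]; ring

theorem d_congr {φ ψ : Co} (w) (h : ∀ u, u.length + 1 = w.length → (∀ x ∈ u, x ∈ w) → φ u = ψ u) :
    d φ w = d ψ w := by
  induction w generalizing φ ψ with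
  | nil => simp [d]
  | cons v w ih =>
    simp only [d]
    rw [h w (by simp) (by simp +contextual)]
    congr 1
    apply ih
    intro u hu hx
    apply h
    · simp [hu]
    · intro x hx'
      rcases List.mem_cons.1 hx' with h | h
      · simp [h]
      · simp [hx x h]

theorem d_zero (w) : d (fun _ => 0) w = 0 := by
  induction w with
  | nil => simp [d]
  | cons v w ih => simp [d, ih]

theorem d_d (φ : Co) (w) : d (d φ) w = 0 := by
  induction w generalizing φ with
  | nil => simp [d]
  | cons v w ih =>
    simp only [d]
    rw [d_add, ih, add_zero, z2]

theorem T_add (n : ℕ) (φ ψ : Co) (w) : T n (fun u => φ u + ψ u) w = T n φ w + T n ψ w := by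
  induction n generalizing φ ψ w with
  | zero => simp [T]
  | succ n ih =>
    simp only [T]
    rw [← d_add]
    congr 1
    funext u
    rw [ih]

theorem T_congr (n : ℕ) {φ ψ : Co} (w) (hw : w.length = n)
    (h : ∀ u, u.length = n → φ u = ψ u) : T n φ w = T n ψ w := by
  induction n generalizing φ ψ w with
  | zero => simp [T, h]
  | succ n ih =>
    simp only [T]
    apply d_congr
    intro u hu _
    apply ih _ (by omega)
    intro u hu
    apply h
    simp [hu]

theorem T_d (n : ℕ) (φ : Co) (w) (hw : w.length = n + 1) :
    T (n + 1) (d φ) w = d (T n φ) w := by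
  induction n generalizing φ w with
  | zero =>
    simp only [T, d]
    simp
  | succ n ih =>
    have h1 : T (n + 1 + 1) (d φ) w
        = d (T (n+1) (fun u => d φ (bary w :: u))) w := rfl
    rw [h1]
    simp only [d]
    have h2 : T (n+1) (fun u => φ u + d (fun u => φ (bary w :: u)) u)
        = fun v => T (n+1) φ v + T (n+1) (d (fun u => φ (bary w :: u))) v := by
      funext v; rw [T_add]
    rw [h2, d_add]
    have h3 : d (T (n+1) (d (fun u => φ (bary w :: u)))) w
        = d (d (T n (fun u => φ (bary w :: u)))) w := by
      apply d_congr
      intro u hu _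
      apply ih
      omega
    rw [h3, d_d, add_zero]

def nu (w : List E4) : List E4 := w.map (fun x => -x)

theorem d_nu (φ : Co) (w) : d (fun u => φ (nu u)) w = d φ (nu w) := by
  induction w generalizing φ with
  | nil => simp [d, nu]
  | cons v w ih =>
    have := ih (fun u => φ (-v :: u))
    simp only [d, nu, List.map_cons] at *
    rw [this]

theorem bary_nu (w) : bary (nu w) = - bary w := by
  have : (nu w).sum = - w.sum := by
    induction w with
    | nil => simp [nu]
    | cons v w ih => simp only [nu, List.map_cons, List.sum_cons] at *; rw [ih]; abel
  have hl : (nu w).length = w.length := by simp [nu]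
  rw [bary, this, hl, bary, smul_neg]

theorem T_nu (n : ℕ) (φ : Co) (w) : T n (fun u => φ (nu u)) w = T n φ (nu w) := by
  induction n generalizing φ w with
  | zero => simp [T, nu]
  | succ n ih =>
    simp only [T]
    rw [← d_nu, bary_nu]
    congr 1
    funext u
    rw [← ih]
    rfl

/-- iterated subdivision -/
noncomputable def It (n : ℕ) : ℕ → Co → Co
  | 0, φ => φ
  | m + 1, φ => T n (It n m φ)

theorem It_d (n m : ℕ) (φ : Co) (w) (hw : w.length = n + 1) :
    It (n+1) m (d φ) w = d (It n m φ) w := by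
  induction m generalizing w with
  | zero => rfl
  | succ m ih =>
    simp only [It]
    rw [← T_d n _ w hw]
    exact T_congr _ _ hw (fun u hu => ih u hu)

theorem It_nu (n m : ℕ) (φ : Co) (w) : It n m (fun u => φ (nu u)) w = It n m φ (nu w) := by
  induction m generalizing w with
  | zero => rfl
  | succ m ih =>
    simp only [It]
    rw [← T_nu]
    congr 1
    funext u
    exact ih u

theorem It_congr (n m : ℕ) {φ ψ : Co} (w) (hw : w.length = n)
    (h : ∀ u, u.length = n → φ u = ψ u) : It n m φ w = It n m ψ w := by
  induction m generalizing w with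
  | zero => exact h w hw
  | succ m ih =>
    simp only [It]
    exact T_congr _ _ hw (fun u hu => ih u hu)

theorem It_add (n m : ℕ) (φ ψ : Co) (w) :
    It n m (fun u => φ u + ψ u) w = It n m φ w + It n m ψ w := by
  induction m generalizing w with
  | zero => rfl
  | succ m ih =>
    simp only [It]
    rw [← T_add]
    congr 1
    funext u
    exact ih u

theorem bary_dist (w : List E4) (D : ℝ) (hD : 0 ≤ D) (h4 : w.length ≤ 4)
    (h : ∀ x ∈ w, ∀ y ∈ w, dist x y ≤ D) (v) (hv : v ∈ w) : dist v (bary w) ≤ 3/4 * D := by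
  obtain ⟨l1, l2, rfl⟩ := List.append_of_mem hv
  have key : ∀ l : List E4, (∀ y ∈ l, dist v y ≤ D) → ‖(l.length : ℝ) • v - l.sum‖ ≤ l.length * D := by
    intro l hl
    induction l with
    | nil => simp
    | cons y l ih =>
      have h1 := ih (fun y hy => hl y (by simp [hy]))
      have h2 := hl y (by simp)
      rw [dist_eq_norm] at h2
      have : (((y :: l).length : ℕ) : ℝ) • v - (y :: l).sum
          = (v - y) + ((l.length : ℝ) • v - l.sum) := by
        simp only [List.length_cons, List.sum_cons]; push_cast; module
      rw [this]
      refine (norm_add_le _ _).trans ?_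
      simp only [List.length_cons]; push_cast; linarith
  have k1 := key (l1 ++ l2) (fun y hy => h v hv y (by
    rcases List.mem_append.1 hy with h | h <;> simp [h]))
  set L : ℝ := ((l1 ++ v :: l2).length : ℝ) with hL
  have hLe : L = ((l1 ++ l2).length : ℝ) + 1 := by
    rw [hL]; simp; ring
  have hn : (0:ℝ) ≤ ((l1 ++ l2).length : ℝ) := Nat.cast_nonneg _
  have hLpos : 0 < L := by linarith
  have hL4 : L ≤ 4 := by rw [hL]; exact_mod_cast h4
  have e : v - bary (l1 ++ v :: l2) = (1 / L) • (((l1 ++ l2).length : ℝ) • v - (l1 ++ l2).sum) := by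
    unfold bary
    rw [← hL]
    have : v = (1/L) • (L • v) := by
      rw [smul_smul, one_div, inv_mul_cancel₀ hLpos.ne', one_smul]
    nth_rewrite 1 [this]
    rw [← smul_sub]
    congr 1
    rw [hLe]
    simp only [List.sum_append, List.sum_cons]
    module
  rw [dist_eq_norm, e, norm_smul, Real.norm_of_nonneg (by positivity)]
  have : 1 / L * ‖((l1 ++ l2).length : ℝ) • v - (l1 ++ l2).sum‖ ≤ 1 / L * ((L - 1) * D) := by
    apply mul_le_mul_of_nonneg_left _ (by positivity)
    rw [hLe]; simpa using k1
  refine this.trans ?_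
  rw [one_div, inv_mul_le_iff₀ hLpos]
  nlinarith

theorem bary_mem (w : List E4) (hw : w ≠ []) : bary w ∈ convexHull ℝ {x | x ∈ w} := by
  have key : ∀ l : List E4, l ≠ [] → ∀ C : Set E4, Convex ℝ C → (∀ x ∈ l, x ∈ C) → bary l ∈ C := by
    intro l hl C hC h
    induction l with
    | nil => exact absurd rfl hl
    | cons v l ih =>
      by_cases h0 : l = []
      · subst h0; simpa [bary] using h v (by simp)
      · have h1 := ih h0 (fun x hx => h x (by simp [hx]))
        have hn : (0:ℝ) < l.length := by
          have := List.length_pos_of_ne_nil h0; exact_mod_cast this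
        have e : bary (v :: l) = (1 / ((l.length:ℝ)+1)) • v + ((l.length:ℝ) / ((l.length:ℝ)+1)) • bary l := by
          unfold bary
          rw [smul_smul]
          simp only [List.length_cons, List.sum_cons, smul_add]
          push_cast
          congr 2
          field_simp
        rw [e]
        apply hC (h v (by simp)) h1 (by positivity) (by positivity)
        field_simp
        ring
  exact key w hw _ (convex_convexHull _ _) (fun x hx => subset_convexHull _ _ hx)

theorem T_van (n : ℕ) (D : ℝ) (hD : 0 ≤ D) (φ : Co) (w) (hw : w.length = n) (hn : n ≤ 4)
    (h : ∀ x ∈ w, ∀ y ∈ w, dist x y ≤ D)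
    (hφ : ∀ u, u.length = n → (∀ x ∈ u, x ∈ convexHull ℝ {x | x ∈ w}) →
      (∀ x ∈ u, ∀ y ∈ u, dist x y ≤ 3/4 * D) → φ u = 0) : T n φ w = 0 := by
  induction n generalizing φ w with
  | zero => simp [T]; apply hφ <;> simp
  | succ n ih =>
    simp only [T]
    rw [← d_zero w]
    apply d_congr
    intro v hv hvw
    apply ih _ v (by omega) (by omega) (fun x hx y hy => h x (hvw x hx) y (hvw y hy))
    intro u hu huc hud
    have hb := bary_mem w (by rintro rfl; simp at hw)
    have hsub : convexHull ℝ {x | x ∈ v} ⊆ convexHull ℝ {x | x ∈ w} :=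
      convexHull_mono (fun x hx => hvw x hx)
    have hball : convexHull ℝ {x | x ∈ w} ⊆ Metric.closedBall (bary w) (3/4 * D) :=
      convexHull_min (fun x hx => bary_dist w D hD (by omega) h x hx) (convex_closedBall _ _)
    apply hφ
    · simp [hu]
    · intro x hx
      rcases List.mem_cons.1 hx with rfl | hx
      · exact hb
      · exact hsub (huc x hx)
    · intro x hx y hy
      rcases List.mem_cons.1 hx with rfl | hx <;> rcases List.mem_cons.1 hy with rfl | hy
      · simp; positivity
      · rw [dist_comm]; exact hball (hsub (huc y hy))
      · exact hball (hsub (huc x hx))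
      · exact hud x hx y hy

theorem It_van (n m : ℕ) (hn : n ≤ 4) (D : ℝ) (hD : 0 ≤ D) (C : Set E4) (hC : Convex ℝ C) (φ : Co) (w)
    (hw : w.length = n)
    (h : ∀ x ∈ w, ∀ y ∈ w, dist x y ≤ D) (hwC : ∀ x ∈ w, x ∈ C)
    (hφ : ∀ u, u.length = n → (∀ x ∈ u, x ∈ C) →
      (∀ x ∈ u, ∀ y ∈ u, dist x y ≤ (3/4)^m * D) → φ u = 0) : It n m φ w = 0 := by
  induction m generalizing D w with
  | zero => exact hφ w hw hwC (by simpa using h)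
  | succ m ih =>
    simp only [It]
    apply T_van n D hD _ w hw hn h
    intro u hu huc hud
    apply ih (3/4 * D) (by positivity) u hu hud
    · intro x hx
      exact convexHull_min (fun x hx => hwC x hx) hC (huc x hx)
    · intro v hv hvc hvd
      apply hφ v hv hvc
      intro x hx y hy
      have := hvd x hx y hy
      rw [pow_succ]; linarith

theorem It_congrC (n m : ℕ) (hn : n ≤ 4) (C : Set E4) (hC : Convex ℝ C) (h0 : (0 : E4) ∉ C)
    (φ ψ : Co) (w) (hw : w.length = n) (hwC : ∀ x ∈ w, x ∈ C)
    (h : ∀ u, u.length = n → (∀ x ∈ u, x ≠ 0) → φ u = ψ u) : It n m φ w = It n m ψ w := by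
  have hb : ∃ D : ℝ, 0 ≤ D ∧ ∀ x ∈ w, ∀ y ∈ w, dist x y ≤ D := by
    have hf : Set.Finite {x | x ∈ w} := List.finite_toSet w
    obtain ⟨D, hD⟩ := Metric.isBounded_iff.1 hf.isBounded
    exact ⟨max D 0, le_max_right _ _, fun x hx y hy => (hD hx hy).trans (le_max_left _ _)⟩
  obtain ⟨D, hD, hd⟩ := hb
  have := It_van n m hn D hD C hC (fun u => φ u + ψ u) w hw hd hwC (by
    intro u hu huC _
    rw [h u hu (fun x hx hx0 => h0 (hx0 ▸ huC x hx)), z2])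
  rw [It_add] at this
  exact CharTwo.add_eq_zero.1 this

noncomputable def sg (b : Bool) : ℝ := if b then 1 else -1

noncomputable def p (i : Fin 4) (b : Bool) : E4 := Pi.single i (sg b)

theorem neg_p (i b) : - p i b = p i (!b) := by
  cases b <;> simp [p, sg, ← Pi.single_neg]

def face (a b c e : Bool) : Set E4 :=
  {x | sg a * x 0 + sg b * x 1 + sg c * x 2 + sg e * x 3 = 1 ∧ ∀ i, |x i| ≤ 1}

theorem face_convex (a b c e) : Convex ℝ (face a b c e) := by
  intro x hx y hy s t hs ht hst
  refine ⟨?_, ?_⟩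
  · simp only [Pi.add_apply, Pi.smul_apply, smul_eq_mul]
    linear_combination s * hx.1 + t * hy.1 + hst
  · intro i
    simp only [Pi.add_apply, Pi.smul_apply, smul_eq_mul]
    have h1 := abs_le.1 (hx.2 i)
    have h2 := abs_le.1 (hy.2 i)
    rw [abs_le]
    constructor <;> nlinarith

theorem zero_face (a b c e) : (0 : E4) ∉ face a b c e := by
  intro h; simpa using h.1

theorem p_face0 (a b c e) : p 0 a ∈ face a b c e := by
  refine ⟨?_, fun i => ?_⟩
  · cases a <;> simp [p, sg]
  · fin_cases i <;> cases a <;> simp [p, sg]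
theorem p_face1 (a b c e) : p 1 b ∈ face a b c e := by
  refine ⟨?_, fun i => ?_⟩
  · cases b <;> simp [p, sg]
  · fin_cases i <;> cases b <;> simp [p, sg]
theorem p_face2 (a b c e) : p 2 c ∈ face a b c e := by
  refine ⟨?_, fun i => ?_⟩
  · cases c <;> simp [p, sg]
  · fin_cases i <;> cases c <;> simp [p, sg]
theorem p_face3 (a b c e) : p 3 e ∈ face a b c e := by
  refine ⟨?_, fun i => ?_⟩
  · cases e <;> simp [p, sg]
  · fin_cases i <;> cases e <;> simp [p, sg]

noncomputable def H0 (φ : Co) : ZMod 2 := φ [p 0 true]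
noncomputable def H1 (φ : Co) : ZMod 2 := ∑ a : Bool, φ [p 0 a, p 1 true]
noncomputable def H2 (φ : Co) : ZMod 2 := ∑ a : Bool, ∑ b : Bool, φ [p 0 a, p 1 b, p 2 true]
noncomputable def H3 (φ : Co) : ZMod 2 :=
  ∑ a : Bool, ∑ b : Bool, ∑ c : Bool, φ [p 0 a, p 1 b, p 2 c, p 3 true]

theorem H1_d (φ : Co) : H1 (d φ) = H0 φ + H0 (fun u => φ (nu u)) := by
  simp only [H1, H0, Fintype.sum_bool, d, nu, List.map, neg_p, Bool.not_true, Bool.not_false]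
  grind

theorem H2_d (φ : Co) : H2 (d φ) = H1 φ + H1 (fun u => φ (nu u)) := by
  simp only [H2, H1, Fintype.sum_bool, d, nu, List.map, neg_p, Bool.not_true, Bool.not_false]
  grind

theorem H3_d (φ : Co) : H3 (d φ) = H2 φ + H2 (fun u => φ (nu u)) := by
  simp only [H2, H3, Fintype.sum_bool, d, nu, List.map, neg_p, Bool.not_true, Bool.not_false]
  grind

section
variable (s : Fin 3 → E4 → ZMod 2)

def phi3 : Co
  | [a, b, c, e] => (s 0 a + s 0 b) * (s 1 b + s 1 c) * (s 2 c + s 2 e)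
  | _ => 0
def psi2 : Co
  | [a, b, c] => s 0 a * (s 1 a + s 1 b) * (s 2 b + s 2 c)
  | _ => 0
def phi2 : Co
  | [a, b, c] => (s 1 a + s 1 b) * (s 2 b + s 2 c)
  | _ => 0
def psi1 : Co
  | [a, b] => s 1 a * (s 2 a + s 2 b)
  | _ => 0
def phi1 : Co
  | [a, b] => s 2 a + s 2 b
  | _ => 0
def psi0 : Co
  | [a] => s 2 a
  | _ => 0

theorem d_psi2 (u : List E4) (hu : u.length = 4) : phi3 s u = d (psi2 s) u := by
  obtain ⟨a, b, c, e, rfl⟩ := List.length_eq_four.1 hu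
  simp only [d, phi3, psi2]
  grind
theorem d_psi1 (u : List E4) (hu : u.length = 3) : phi2 s u = d (psi1 s) u := by
  obtain ⟨a, b, c, rfl⟩ := List.length_eq_three.1 hu
  simp only [d, phi2, psi1]
  grind
theorem d_psi0 (u : List E4) (hu : u.length = 2) : phi1 s u = d (psi0 s) u := by
  obtain ⟨a, b, rfl⟩ := List.length_eq_two.1 hu
  simp only [d, phi1, psi0]
  grind

theorem nu_psi2 (hs : ∀ i z, z ≠ 0 → s i (-z) = s i z + 1) (u : List E4) (hu : u.length = 3) (h0 : ∀ x ∈ u, x ≠ 0) :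
    psi2 s (nu u) = psi2 s u + phi2 s u := by
  obtain ⟨a, b, c, rfl⟩ := List.length_eq_three.1 hu
  simp only [List.mem_cons, forall_eq_or_imp, List.not_mem_nil] at h0
  simp only [nu, List.map, phi2, psi2]
  rw [hs _ a h0.1, hs _ a h0.1, hs _ b h0.2.1, hs _ b h0.2.1, hs _ c h0.2.2.1]
  grind
theorem nu_psi1 (hs : ∀ i z, z ≠ 0 → s i (-z) = s i z + 1) (u : List E4) (hu : u.length = 2) (h0 : ∀ x ∈ u, x ≠ 0) :
    psi1 s (nu u) = psi1 s u + phi1 s u := by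
  obtain ⟨a, b, rfl⟩ := List.length_eq_two.1 hu
  simp only [List.mem_cons, forall_eq_or_imp, List.not_mem_nil] at h0
  simp only [nu, List.map, phi1, psi1]
  rw [hs _ a h0.1, hs _ a h0.1, hs _ b h0.2.1]
  grind
theorem nu_psi0 (hs : ∀ i z, z ≠ 0 → s i (-z) = s i z + 1) (u : List E4) (hu : u.length = 1) (h0 : ∀ x ∈ u, x ≠ 0) :
    psi0 s (nu u) = psi0 s u + 1 := by
  obtain ⟨a, rfl⟩ := List.length_eq_one_iff.1 hu
  simp only [List.mem_cons, forall_eq_or_imp, List.not_mem_nil] at h0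
  simp only [nu, List.map, psi0]
  rw [hs _ a h0.1]

theorem It_one (m : ℕ) (v : E4) : It 1 m (fun _ => 1) [v] = 1 := by
  have : It 1 m (fun _ => (1 : ZMod 2)) [v] = 1 := by
    induction m generalizing v with
    | zero => rfl
    | succ m ih =>
      simp only [It, T, d]
      rw [ih]; simp
  exact this

theorem step1 (hs : ∀ i z, z ≠ 0 → s i (-z) = s i z + 1) (m : ℕ) : H1 (It 2 m (phi1 s)) = 1 := by
  have e1 : H1 (It 2 m (phi1 s)) = H1 (d (It 1 m (psi0 s))) := by
    unfold H1
    refine Finset.sum_congr rfl (fun a _ => ?_)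
    rw [← It_d 1 m _ _ (by simp)]
    exact It_congr _ _ _ (by simp) (fun u hu => d_psi0 s u hu)
  rw [e1, H1_d]
  unfold H0
  beta_reduce
  rw [← It_nu, It_congrC 1 m (by norm_num) (face true true true true) (face_convex _ _ _ _)
    (zero_face _ _ _ _) (fun u => psi0 s (nu u)) (fun u => psi0 s u + 1) _ (by simp)
    (by simp [p_face0]) (fun u hu h0 => nu_psi0 s hs u hu h0), It_add, It_one]
  grind

theorem step2 (hs : ∀ i z, z ≠ 0 → s i (-z) = s i z + 1) (m : ℕ) : H2 (It 3 m (phi2 s)) = 1 := by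
  have e1 : H2 (It 3 m (phi2 s)) = H2 (d (It 2 m (psi1 s))) := by
    unfold H2
    refine Finset.sum_congr rfl (fun a _ => Finset.sum_congr rfl (fun b _ => ?_))
    rw [← It_d 2 m _ _ (by simp)]
    exact It_congr _ _ _ (by simp) (fun u hu => d_psi1 s u hu)
  rw [e1, H2_d, ← step1 s hs m]
  unfold H1
  rw [← Finset.sum_add_distrib]
  refine Finset.sum_congr rfl (fun a _ => ?_)
  beta_reduce
  rw [← It_nu, It_congrC 2 m (by norm_num) (face a true true true) (face_convex _ _ _ _)
    (zero_face _ _ _ _) (fun u => psi1 s (nu u)) (fun u => psi1 s u + phi1 s u) _ (by simp)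
    (by simp [p_face0, p_face1]) (fun u hu h0 => nu_psi1 s hs u hu h0), It_add]
  grind

theorem step3 (hs : ∀ i z, z ≠ 0 → s i (-z) = s i z + 1) (m : ℕ) : H3 (It 4 m (phi3 s)) = 1 := by
  have e1 : H3 (It 4 m (phi3 s)) = H3 (d (It 3 m (psi2 s))) := by
    unfold H3
    refine Finset.sum_congr rfl (fun a _ => Finset.sum_congr rfl (fun b _ =>
      Finset.sum_congr rfl (fun c _ => ?_)))
    rw [← It_d 3 m _ _ (by simp)]
    exact It_congr _ _ _ (by simp) (fun u hu => d_psi2 s u hu)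
  rw [e1, H3_d, ← step2 s hs m]
  unfold H2
  rw [← Finset.sum_add_distrib]
  refine Finset.sum_congr rfl (fun a _ => ?_)
  rw [← Finset.sum_add_distrib]
  refine Finset.sum_congr rfl (fun b _ => ?_)
  beta_reduce
  rw [← It_nu, It_congrC 3 m (by norm_num) (face a b true true) (face_convex _ _ _ _)
    (zero_face _ _ _ _) (fun u => psi2 s (nu u)) (fun u => psi2 s u + phi2 s u) _ (by simp)
    (by simp [p_face0, p_face1, p_face2]) (fun u hu h0 => nu_psi2 s hs u hu h0), It_add]
  grind

theorem exists_word (hs : ∀ i z, z ≠ 0 → s i (-z) = s i z + 1) (m : ℕ) : ∃ x y : Fin 3 → E4, ∃ z : E4, (∃ a b c e, z ∈ face a b c e) ∧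
    (∀ i, dist (x i) z ≤ (3/4)^m * 2 ∧ dist (y i) z ≤ (3/4)^m * 2 ∧ s i (x i) + s i (y i) ≠ 0) := by
  by_contra hcon
  push Not at hcon
  have h1 := step3 s hs m
  have h0 : H3 (It 4 m (phi3 s)) = 0 := by
    unfold H3
    refine Finset.sum_eq_zero (fun a _ => Finset.sum_eq_zero (fun b _ =>
      Finset.sum_eq_zero (fun c _ => ?_)))
    have hf : ∀ x ∈ [p 0 a, p 1 b, p 2 c, p 3 true], x ∈ face a b c true := by
      simp [p_face0, p_face1, p_face2, p_face3]
    refine It_van 4 m le_rfl 2 (by norm_num) (face a b c true) (face_convex _ _ _ _) _ _ (by simp) ?_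
      hf ?_
    · intro x hx y hy
      rw [dist_pi_le_iff (by norm_num)]
      intro i
      have h1 := abs_le.1 ((hf x hx).2 i)
      have h2 := abs_le.1 ((hf y hy).2 i)
      rw [Real.dist_eq, abs_le]
      constructor <;> linarith
    · intro u hu hC hd
      obtain ⟨v0, v1, v2, v3, rfl⟩ := List.length_eq_four.1 hu
      simp only [phi3]
      by_contra hne
      have g2 := right_ne_zero_of_mul hne
      have g01 := left_ne_zero_of_mul hne
      have g1 := right_ne_zero_of_mul g01
      have g0 := left_ne_zero_of_mul g01
      obtain ⟨i, hi⟩ := hcon ![v0, v1, v2] ![v1, v2, v3] v0 ⟨a, b, c, true, hC v0 (by simp)⟩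
      revert hi
      fin_cases i
      · exact fun hi => g0 (hi (hd v0 (by simp) v0 (by simp)) (hd v1 (by simp) v0 (by simp)))
      · exact fun hi => g1 (hi (hd v1 (by simp) v0 (by simp)) (hd v2 (by simp) v0 (by simp)))
      · exact fun hi => g2 (hi (hd v2 (by simp) v0 (by simp)) (hd v3 (by simp) v0 (by simp)))
  rw [h0] at h1
  exact zero_ne_one h1
end

/-- A Lusternik-Schnirelmann form of the Borsuk-Ulam theorem on the 3-sphere. -/
theorem borsuk_ulam (s : Fin 3 → E4 → Prop) (hs : ∀ i z, z ≠ 0 → (s i (-z) ↔ ¬ s i z)) :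
    ∃ z : E4, z ≠ 0 ∧ ∀ i, z ∈ closure {x | s i x} ∧ z ∈ closure {x | ¬ s i x} := by
  have hw := fun m => exists_word (fun i z => if s i z then 1 else 0) (by
    intro i z hz
    have := hs i z hz
    by_cases h : s i z
    · simp [h, this]; exact (z2 1).symm
    · simp [h, this]) m
  choose x y z hz hxy using hw
  have hcl : IsClosed {z : E4 | ∃ a b c e, z ∈ face a b c e} := by
    have : {z : E4 | ∃ a b c e, z ∈ face a b c e} = ⋃ a, ⋃ b, ⋃ c, ⋃ e, face a b c e := by
      ext z; simp
    rw [this]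
    refine isClosed_iUnion_of_finite fun a => isClosed_iUnion_of_finite fun b =>
      isClosed_iUnion_of_finite fun c => isClosed_iUnion_of_finite fun e => ?_
    unfold face
    apply IsClosed.inter
    · exact isClosed_eq (by fun_prop) (by fun_prop)
    · have : {x : E4 | ∀ i, |x i| ≤ 1} = ⋂ i, {x : E4 | |x i| ≤ 1} := by ext; simp
      change IsClosed {x : E4 | ∀ i, |x i| ≤ 1}
      rw [this]
      exact isClosed_iInter fun i => isClosed_le (by fun_prop) (by fun_prop)
  have hcomp : IsCompact {z : E4 | ∃ a b c e, z ∈ face a b c e} := by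
    apply Metric.isCompact_of_isClosed_isBounded hcl
    apply (Metric.isBounded_closedBall (x := (0 : E4)) (r := 1)).subset
    rintro z ⟨a, b, c, e, h⟩
    rw [Metric.mem_closedBall, dist_zero_right, pi_norm_le_iff_of_nonneg (by norm_num)]
    exact h.2
  obtain ⟨z0, ⟨a, b, c, e, hz0⟩, f, hf, hlim⟩ := hcomp.tendsto_subseq hz
  refine ⟨z0, fun h => zero_face a b c e (h ▸ hz0), ?_⟩
  have h34 : Filter.Tendsto (fun m => ((3/4 : ℝ))^(f m) * 2) Filter.atTop (nhds 0) := by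
    have := (tendsto_pow_atTop_nhds_zero_of_lt_one (r := (3/4 : ℝ)) (by norm_num) (by norm_num)).comp
      hf.tendsto_atTop
    simpa using this.mul_const 2
  have hd := (tendsto_iff_dist_tendsto_zero.1 hlim)
  have hsum := h34.add hd
  simp only [add_zero] at hsum
  intro i
  have close : ∀ ε > 0, ∃ m, dist (x m i) z0 < ε ∧ dist (y m i) z0 < ε := by
    intro ε hε
    obtain ⟨m, hm⟩ := (hsum.eventually (gt_mem_nhds hε)).exists
    refine ⟨f m, ?_, ?_⟩
    · exact (dist_triangle _ (z (f m)) _).trans_lt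
        (lt_of_le_of_lt (add_le_add_left (hxy (f m) i).1 _) hm)
    · exact (dist_triangle _ (z (f m)) _).trans_lt
        (lt_of_le_of_lt (add_le_add_left (hxy (f m) i).2.1 _) hm)
  have hne : ∀ m, (s i (x m i) ∧ ¬ s i (y m i)) ∨ (¬ s i (x m i) ∧ s i (y m i)) := by
    intro m
    have := (hxy m i).2.2
    by_cases h1 : s i (x m i) <;> by_cases h2 : s i (y m i) <;> simp [h1, h2, z2] at this ⊢
  constructor
  · rw [Metric.mem_closure_iff]
    intro ε hε
    obtain ⟨m, h1, h2⟩ := close ε hε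
    rcases hne m with h | h
    · exact ⟨x m i, h.1, by rwa [dist_comm]⟩
    · exact ⟨y m i, h.2, by rwa [dist_comm]⟩
  · rw [Metric.mem_closure_iff]
    intro ε hε
    obtain ⟨m, h1, h2⟩ := close ε hε
    rcases hne m with h | h
    · exact ⟨y m i, h.2, by rwa [dist_comm]⟩
    · exact ⟨x m i, h.1, by rwa [dist_comm]⟩


section rows
variable (M : Fin 3 → Fin 4 → ℝ)

noncomputable def Pp (i : Fin 3) (z : E4) : ℝ := ∑ j, M i j * max (z j) 0
noncomputable def Pm (i : Fin 3) (z : E4) : ℝ := ∑ j, M i j * max (-z j) 0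

theorem Pp_neg (i z) : Pp M i (-z) = Pm M i z := by simp [Pp, Pm]
theorem Pm_neg (i z) : Pm M i (-z) = Pp M i z := by simp [Pp, Pm]

theorem Pp_cont (i) : Continuous (Pp M i) := by unfold Pp; fun_prop
theorem Pm_cont (i) : Continuous (Pm M i) := by unfold Pm; fun_prop

noncomputable def gg (i : Fin 3) (z : E4) : ℝ :=
  if 0 < z i.castSucc then Pp M i z - max (Pm M i z) 0
  else if z i.castSucc < 0 then max (Pp M i z) 0 - Pm M i z
  else Pp M i z - Pm M i z

theorem gg_neg (i z) : gg M i (-z) = - gg M i z := by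
  unfold gg
  rw [Pp_neg, Pm_neg]
  simp only [Pi.neg_apply, Left.neg_pos_iff, Left.neg_neg_iff]
  rcases lt_trichotomy (z i.castSucc) 0 with h | h | h
  · simp [h, h.le, not_lt.2 h.le]
  · simp [h]
  · simp [h, not_lt.2 h.le]

/-- an odd tie-breaking rule -/
def lexpos (z : E4) : Prop :=
  0 < z 0 ∨ (z 0 = 0 ∧ (0 < z 1 ∨ (z 1 = 0 ∧ (0 < z 2 ∨ (z 2 = 0 ∧ 0 < z 3)))))

theorem lexpos_neg (z : E4) (hz : z ≠ 0) : lexpos (-z) ↔ ¬ lexpos z := by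
  have : z 0 ≠ 0 ∨ z 1 ≠ 0 ∨ z 2 ≠ 0 ∨ z 3 ≠ 0 := by
    by_contra h
    push Not at h
    apply hz
    funext i
    fin_cases i <;> simp [h]
  unfold lexpos
  simp only [Pi.neg_apply]
  rcases lt_trichotomy (z 0) 0 with h0 | h0 | h0
  · simp [h0, h0.ne, not_lt.2 h0.le]
  · rcases lt_trichotomy (z 1) 0 with h1 | h1 | h1
    · simp [h0, h1, h1.ne, not_lt.2 h1.le]
    · rcases lt_trichotomy (z 2) 0 with h2 | h2 | h2
      · simp [h0, h1, h2, h2.ne, not_lt.2 h2.le]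
      · rcases lt_trichotomy (z 3) 0 with h3 | h3 | h3
        · simp [h0, h1, h2, h3, h3.ne, not_lt.2 h3.le]
        · exfalso; simp [h0, h1, h2, h3] at this
        · simp [h0, h1, h2, h3, h3.ne', not_lt.2 h3.le]
      · simp [h0, h1, h2, h2.ne', not_lt.2 h2.le]
    · simp [h0, h1, h1.ne', not_lt.2 h1.le]
  · simp [h0, h0.ne', not_lt.2 h0.le]

def ss (i : Fin 3) (z : E4) : Prop := 0 < gg M i z ∨ (gg M i z = 0 ∧ lexpos z)

theorem ss_neg (i z) (hz : z ≠ 0) : ss M i (-z) ↔ ¬ ss M i z := by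
  unfold ss
  rw [gg_neg, lexpos_neg z hz]
  rcases lt_trichotomy (gg M i z) 0 with h | h | h
  · simp [h, h.ne, not_lt.2 h.le]
  · simp [h]
  · simp [h, h.ne', not_lt.2 h.le]

theorem rows : ∃ z : E4, z ≠ 0 ∧ ∀ i : Fin 3,
    (Pp M i z = Pm M i z ∧ 0 ≤ Pp M i z) ∨
    (0 ≤ z i.castSucc ∧ Pp M i z = 0 ∧ Pm M i z ≤ 0) ∨
    (z i.castSucc ≤ 0 ∧ Pm M i z = 0 ∧ Pp M i z ≤ 0) ∨
    (z i.castSucc = 0 ∧ Pp M i z ≤ 0 ∧ Pm M i z ≤ 0) := by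
  obtain ⟨z, hz, h⟩ := borsuk_ulam (ss M) (ss_neg M)
  refine ⟨z, hz, fun i => ?_⟩
  have c1 := Pp_cont M i
  have c2 := Pm_cont M i
  have c3 : Continuous fun z : E4 => z i.castSucc := continuous_apply _
  have hp : IsClosed {z : E4 | (0 ≤ z i.castSucc ∧ 0 ≤ Pp M i z - max (Pm M i z) 0) ∨
      (z i.castSucc ≤ 0 ∧ 0 ≤ max (Pp M i z) 0 - Pm M i z)} := by
    apply IsClosed.union
    · exact (isClosed_le continuous_const c3).inter (isClosed_le continuous_const (c1.sub (c2.max continuous_const)))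
    · exact (isClosed_le c3 continuous_const).inter (isClosed_le continuous_const ((c1.max continuous_const).sub c2))
  have hm : IsClosed {z : E4 | (0 ≤ z i.castSucc ∧ Pp M i z - max (Pm M i z) 0 ≤ 0) ∨
      (z i.castSucc ≤ 0 ∧ max (Pp M i z) 0 - Pm M i z ≤ 0)} := by
    apply IsClosed.union
    · exact (isClosed_le continuous_const c3).inter (isClosed_le (c1.sub (c2.max continuous_const)) continuous_const)
    · exact (isClosed_le c3 continuous_const).inter (isClosed_le ((c1.max continuous_const).sub c2) continuous_const)
  have h1 := closure_minimal (s := {x | ss M i x}) (by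
    intro x hx
    have hg : 0 ≤ gg M i x := by
      rcases hx with hx | hx
      · exact hx.le
      · exact hx.1.ge
    unfold gg at hg
    simp only [Set.mem_ofPred_eq]
    have := le_max_left (Pp M i x) 0
    split_ifs at hg with a b
    · exact Or.inl ⟨a.le, hg⟩
    · exact Or.inr ⟨b.le, hg⟩
    · exact Or.inr ⟨not_lt.1 a, by linarith⟩) hp (h i).1
  have h2 := closure_minimal (s := {x | ¬ ss M i x}) (by
    intro x hx
    have hg : gg M i x ≤ 0 := by
      by_contra hc
      exact hx (Or.inl (not_le.1 hc))
    unfold gg at hg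
    simp only [Set.mem_ofPred_eq]
    have := le_max_left (Pm M i x) 0
    split_ifs at hg with a b
    · exact Or.inl ⟨a.le, hg⟩
    · exact Or.inr ⟨b.le, hg⟩
    · exact Or.inl ⟨not_lt.1 b, by linarith⟩) hm (h i).2
  simp only [Set.mem_ofPred_eq] at h1 h2
  generalize z i.castSucc = t at *
  generalize Pp M i z = a at *
  generalize Pm M i z = b at *
  clear hz h hp hm c1 c2 c3
  rcases max_cases a 0 with ⟨ha, ha'⟩ | ⟨ha, ha'⟩ <;>
  rcases max_cases b 0 with ⟨hb, hb'⟩ | ⟨hb, hb'⟩ <;>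
  rw [ha, hb] at h1 h2 <;> grind

end rows

/-! Combinatorial types of a color class. -/

def one : Fin 5 → Fin 4 := ![0, 1, 0, 1, 2]

def two : Fin 5 → Fin 4 → Bool :=
  ![![false, false, true, true], ![false, false, true, true], ![false, true, true, false],
    ![true, false, true, false], ![true, true, false, false]]

def inD (a b c : Fin 5) (e : Fin 4) (j : Fin 4) : Fin 7 → Bool :=
  ![decide (one a = j), two a j, decide (one b = j), two b j, decide (one c = j), two c j,
    decide (e = j)]

def DD (a b c : Fin 5) (e : Fin 4) (j : Fin 4) : Finset (Fin 7) :=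
  Finset.univ.filter (fun v => inD a b c e j v = true)

theorem DD_rainbow (a b c : Fin 5) (e : Fin 4) (i cc : Fin 4) :
    (DD a b c e i ∩ colorClass7 cc).card ≤ 1 := by
  revert a b c e i cc
  decide +kernel

theorem DD_one (a b c : Fin 5) (e : Fin 4) (v : Fin 7) (hv : v ∈ ({0, 2, 4, 6} : Finset (Fin 7))) :
    (Finset.univ.filter fun i : Fin 4 => v ∈ DD a b c e i).card = 1 := by
  revert a b c e v
  decide +kernel

theorem DD_two (a b c : Fin 5) (e : Fin 4) (v : Fin 7) (hv : v ∈ ({1, 3, 5} : Finset (Fin 7))) :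
    (Finset.univ.filter fun i : Fin 4 => v ∈ DD a b c e i).card = 2 := by
  revert a b c e v
  decide +kernel

abbrev Pl := EuclideanSpace ℝ (Fin 2)

theorem hull (x : Fin 7 → Pl) (W : Fin 7 → ℝ) (S : Finset (Fin 7)) (h0 : ∀ v, 0 ≤ W v)
    (hS : ∀ v, W v ≠ 0 → v ∈ S) (κ : ℝ) (hκ : 0 < κ) (hsum : ∑ v, W v = κ) (q : Pl)
    (hq : ∑ v, W v • x v = q) : κ⁻¹ • q ∈ convexHull ℝ (x '' (S : Set (Fin 7))) := by
  have e : κ⁻¹ • q = Finset.univ.centerMass W x := by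
    rw [Finset.centerMass, hsum, hq]
  rw [e, ← Finset.centerMass_filter_ne_zero]
  apply Finset.centerMass_mem_convexHull
  · intro i _; exact h0 i
  · rw [Finset.sum_filter_ne_zero, hsum]; exact hκ
  · intro i hi
    exact ⟨i, hS i (Finset.mem_filter.1 hi).2, rfl⟩

theorem row_type (p m t : ℝ)
    (h : (p = m ∧ 0 ≤ p) ∨ (0 ≤ t ∧ p = 0 ∧ m ≤ 0) ∨ (t ≤ 0 ∧ m = 0 ∧ p ≤ 0) ∨
      (t = 0 ∧ p ≤ 0 ∧ m ≤ 0)) :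
    ∃ (τ : Fin 5) (k : ℝ), 0 ≤ k ∧ p ≤ k ∧ m ≤ k ∧ (one τ ≠ 0 → t ≤ 0) ∧ (one τ ≠ 1 → 0 ≤ t) ∧
      (two τ 0 = false → k = p) ∧ (two τ 1 = false → k = m) ∧ (two τ 2 = false → k = 0) ∧
      (two τ 3 = false → k = 0) := by
  rcases h with h | h | h | h
  · rcases le_total 0 t with ht | ht
    · exact ⟨0, p, by simp [one, two, ht, h.2, h.1] at *; grind⟩
    · exact ⟨1, p, by simp [one, two, ht, h.2, h.1] at *; grind⟩
  · exact ⟨2, 0, by simp [one, two, h]⟩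
  · exact ⟨3, 0, by simp [one, two, h]⟩
  · exact ⟨4, 0, by simp [one, two, h]⟩

theorem main_indep (x : Fin 7 → Pl) (c : Fin 7 → Fin 3 → ℝ) (hc1 : ∀ v, c v 0 + c v 1 + c v 2 = 1)
    (hc : ∀ v, x v = c v 0 • x 1 + c v 1 • x 3 + c v 2 • x 5) :
    ∃ (a b c : Fin 5) (e : Fin 4) (q : Pl),
      ∀ i : Fin 4, q ∈ convexHull ℝ (x '' (DD a b c e i : Set (Fin 7))) := by
  obtain ⟨z, hz, h⟩ := rows (fun i j => c (![0, 2, 4, 6] j) i)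
  choose τ k hk0 hkp hkm h1 h2 h3 h4 h5 h6 using fun i => row_type _ _ _ (h i)
  have e1 : ∀ i, Pp (fun i j => c (![0, 2, 4, 6] j) i) i z =
      c 0 i * max (z 0) 0 + c 2 i * max (z 1) 0 + c 4 i * max (z 2) 0 + c 6 i * max (z 3) 0 := by
    intro i; simp [Pp, Fin.sum_univ_four]
  have e2 : ∀ i, Pm (fun i j => c (![0, 2, 4, 6] j) i) i z =
      c 0 i * max (-z 0) 0 + c 2 i * max (-z 1) 0 + c 4 i * max (-z 2) 0 + c 6 i * max (-z 3) 0 := by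
    intro i; simp [Pm, Fin.sum_univ_four]
  generalize Pp (fun i j => c (![0, 2, 4, 6] j) i) = P at *
  generalize Pm (fun i j => c (![0, 2, 4, 6] j) i) = Q at *
  have hp : ∀ j, 0 ≤ max (z j) 0 := fun j => le_max_right _ _
  have hm : ∀ j, 0 ≤ max (-z j) 0 := fun j => le_max_right _ _
  have hpz : ∀ j, max (z j) 0 ≠ 0 → 0 < z j := by
    intro j hj; by_contra hc; exact hj (max_eq_right (not_lt.1 hc))
  have hmz : ∀ j, max (-z j) 0 ≠ 0 → z j < 0 := by
    intro j hj; by_contra hc; exact hj (max_eq_right (by linarith [not_lt.1 hc]))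
  have sp : max (z 0) 0 + max (z 1) 0 + max (z 2) 0 + max (z 3) 0 + (k 0 - P 0 z) + (k 1 - P 1 z)
      + (k 2 - P 2 z) = k 0 + k 1 + k 2 := by
    rw [e1, e1, e1]
    linear_combination -max (z 0) 0 * hc1 0 - max (z 1) 0 * hc1 2 - max (z 2) 0 * hc1 4
      - max (z 3) 0 * hc1 6
  have sm : max (-z 0) 0 + max (-z 1) 0 + max (-z 2) 0 + max (-z 3) 0 + (k 0 - Q 0 z) + (k 1 - Q 1 z)
      + (k 2 - Q 2 z) = k 0 + k 1 + k 2 := by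
    rw [e2, e2, e2]
    linear_combination -max (-z 0) 0 * hc1 0 - max (-z 1) 0 * hc1 2 - max (-z 2) 0 * hc1 4
      - max (-z 3) 0 * hc1 6
  have hκ : 0 < k 0 + k 1 + k 2 := by
    by_contra hneg
    apply hz
    have a0 := hkp 0
    have a1 := hkp 1
    have a2 := hkp 2
    have b0 := hkm 0
    have b1 := hkm 1
    have b2 := hkm 2
    have q0 := hp 0
    have q1 := hp 1
    have q2 := hp 2
    have q3 := hp 3
    have r0 := hm 0
    have r1 := hm 1
    have r2 := hm 2
    have r3 := hm 3
    have key : ∀ j, max (z j) 0 ≤ 0 ∧ max (-z j) 0 ≤ 0 := by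
      intro j
      fin_cases j <;> constructor <;> simp only [Fin.zero_eta, Fin.mk_one, Fin.reduceFinMk] <;> linarith
    funext j
    have k1 := (le_max_left _ _).trans (key j).1
    have k2 := (le_max_left _ _).trans (key j).2
    simp only [Pi.zero_apply]; linarith
  refine ⟨τ 0, τ 1, τ 2, if 0 ≤ z 3 then 0 else 1,
    (k 0 + k 1 + k 2)⁻¹ • (k 0 • x 1 + k 1 • x 3 + k 2 • x 5), ?_⟩
  have mem : ∀ e j v, v ∈ DD (τ 0) (τ 1) (τ 2) e j ↔ inD (τ 0) (τ 1) (τ 2) e j v = true := by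
    intro e j v; simp [DD]
  have hA := h1 0
  have hB := h1 1
  have hC := h1 2
  have hA' := h2 0
  have hB' := h2 1
  have hC' := h2 2
  simp only [Fin.castSucc_zero, Fin.castSucc_one, show (2 : Fin 3).castSucc = (2 : Fin 4) from rfl]
    at hA hB hC hA' hB' hC'
  intro i
  fin_cases i
  · apply hull x ![max (z 0) 0, k 0 - P 0 z, max (z 1) 0, k 1 - P 1 z, max (z 2) 0, k 2 - P 2 z,
      max (z 3) 0] _ _ _ _ hκ
    · rw [← sp]; simp [Fin.sum_univ_succ]; ring
    · have g0 := hc 0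
      have g2 := hc 2
      have g4 := hc 4
      have g6 := hc 6
      simp only [Fin.sum_univ_succ, Fin.sum_univ_zero]
      simp
      rw [g0, g2, g4, g6, e1, e1, e1]
      module
    · intro v
      fin_cases v <;> simp [hp, hkp]
    · intro v hv
      rw [mem]
      fin_cases v <;> simp [inD] at hv ⊢
      · by_contra hh; linarith [hA hh]
      · by_contra hh; apply hv; linarith [h3 0 (by simpa using hh)]
      · by_contra hh; linarith [hB hh]
      · by_contra hh; apply hv; linarith [h3 1 (by simpa using hh)]
      · by_contra hh; linarith [hC hh]
      · by_contra hh; apply hv; linarith [h3 2 (by simpa using hh)]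
      · linarith
  · apply hull x ![max (-z 0) 0, k 0 - Q 0 z, max (-z 1) 0, k 1 - Q 1 z, max (-z 2) 0, k 2 - Q 2 z,
      max (-z 3) 0] _ _ _ _ hκ
    · rw [← sm]; simp [Fin.sum_univ_succ]; ring
    · have g0 := hc 0
      have g2 := hc 2
      have g4 := hc 4
      have g6 := hc 6
      simp only [Fin.sum_univ_succ, Fin.sum_univ_zero]
      simp
      rw [g0, g2, g4, g6, e2, e2, e2]
      module
    · intro v
      fin_cases v <;> simp [hm, hkm]
    · intro v hv
      rw [mem]
      fin_cases v <;> simp [inD] at hv ⊢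
      · by_contra hh; linarith [hA' hh]
      · by_contra hh; apply hv; linarith [h4 0 (by simpa using hh)]
      · by_contra hh; linarith [hB' hh]
      · by_contra hh; apply hv; linarith [h4 1 (by simpa using hh)]
      · by_contra hh; linarith [hC' hh]
      · by_contra hh; apply hv; linarith [h4 2 (by simpa using hh)]
      · linarith
  · apply hull x ![0, k 0, 0, k 1, 0, k 2, 0] _ _ _ _ hκ
    · simp [Fin.sum_univ_succ]; ring
    · simp only [Fin.sum_univ_succ, Fin.sum_univ_zero]
      simp
      abel
    · intro v
      fin_cases v <;> simp [hk0]
    · intro v hv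
      rw [mem]
      fin_cases v <;> simp [inD] at hv ⊢
      · by_contra hh; exact hv (h5 0 (by simpa using hh))
      · by_contra hh; exact hv (h5 1 (by simpa using hh))
      · by_contra hh; exact hv (h5 2 (by simpa using hh))
  · apply hull x ![0, k 0, 0, k 1, 0, k 2, 0] _ _ _ _ hκ
    · simp [Fin.sum_univ_succ]; ring
    · simp only [Fin.sum_univ_succ, Fin.sum_univ_zero]
      simp
      abel
    · intro v
      fin_cases v <;> simp [hk0]
    · intro v hv
      rw [mem]
      fin_cases v <;> simp [inD] at hv ⊢
      · by_contra hh; exact hv (h6 0 (by simpa using hh))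
      · by_contra hh; exact hv (h6 1 (by simpa using hh))
      · by_contra hh; exact hv (h6 2 (by simpa using hh))

/-- the degenerate case: one doubled point lies between the other two -/
theorem main_between (x : Fin 7 → Pl) (a b c : Fin 5) (u v w : Fin 7)
    (h : Wbtw ℝ (x u) (x v) (x w))
    (h0 : ∀ j : Fin 4, v ∈ DD a b c 0 j ∨ (u ∈ DD a b c 0 j ∧ w ∈ DD a b c 0 j)) :
    ∃ (a b c : Fin 5) (e : Fin 4) (q : Pl),
      ∀ i : Fin 4, q ∈ convexHull ℝ (x '' (DD a b c e i : Set (Fin 7))) := by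
  refine ⟨a, b, c, 0, x v, fun j => ?_⟩
  rcases h0 j with h1 | ⟨h1, h2⟩
  · exact subset_convexHull _ _ (Set.mem_image_of_mem x (Finset.mem_coe.2 h1))
  · exact (convex_convexHull ℝ _).segment_subset
      (subset_convexHull _ _ (Set.mem_image_of_mem x (Finset.mem_coe.2 h1))) (subset_convexHull _ _ (Set.mem_image_of_mem x (Finset.mem_coe.2 h2))) h.mem_segment

theorem main (x : Fin 7 → Pl) :
    ∃ (a b c : Fin 5) (e : Fin 4) (q : Pl),
      ∀ i : Fin 4, q ∈ convexHull ℝ (x '' (DD a b c e i : Set (Fin 7))) := by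
  by_cases hcol : Collinear ℝ {x 1, x 3, x 5}
  · rcases hcol.wbtw_or_wbtw_or_wbtw with h | h | h
    · exact main_between x 0 4 0 1 3 5 h (by decide +kernel)
    · exact main_between x 4 4 0 3 5 1 h (by decide +kernel)
    · exact main_between x 0 4 4 5 1 3 h (by decide +kernel)
  · have hi : AffineIndependent ℝ ![x 1, x 3, x 5] := affineIndependent_iff_not_collinear_set.2 hcol
    have htop : affineSpan ℝ (Set.range ![x 1, x 3, x 5]) = ⊤ := by
      rw [hi.affineSpan_eq_top_iff_card_eq_finrank_add_one]
      simp
    let B : AffineBasis (Fin 3) ℝ Pl := ⟨![x 1, x 3, x 5], hi, htop⟩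
    apply main_indep x (fun v i => B.coord i (x v))
    · intro v
      have := B.sum_coord_apply_eq_one (x v)
      rw [Fin.sum_univ_three] at this
      exact this
    · intro v
      have := B.linear_combination_coord_eq_self (x v)
      rw [Fin.sum_univ_three] at this
      exact this.symm

end BU

/-- **Affine multiple colored Tverberg theorem** (Corollary 1.6/`cor:seven-points`).
For any `7` points in the plane colored by `4` colors with classes
`A = {a₁,a₂}`, `B = {b₁,b₂}`, `C = {c₁,c₂}`, `D = {d}` (equivalently, any affine map
from the `6`-simplex, determined by the images `x i` of the vertices), there exist four
rainbow subsets `Δ 0, Δ 1, Δ 2, Δ 3` of the vertex set whose convex hulls of images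
have a common point, such that each of `a₁, b₁, c₁, d` lies in exactly one of the `Δ i`
and each of `a₂, b₂, c₂` lies in exactly two of them. -/
theorem affine_multiple_colored_tverberg (x : Fin 7 → EuclideanSpace ℝ (Fin 2)) :
    ∃ Δ : Fin 4 → Finset (Fin 7),
      -- each Δ i is a rainbow set: at most one vertex of each color class
      (∀ i : Fin 4, ∀ c : Fin 4, (Δ i ∩ colorClass7 c).card ≤ 1) ∧
      -- the convex hulls of the four image sets have a common point
      (∃ p : EuclideanSpace ℝ (Fin 2),
        ∀ i : Fin 4, p ∈ convexHull ℝ (x '' (Δ i : Set (Fin 7)))) ∧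
      -- a₁, b₁, c₁, d each appear in exactly one of the Δ i
      (∀ v : Fin 7, v ∈ ({0, 2, 4, 6} : Finset (Fin 7)) →
        (Finset.univ.filter fun i : Fin 4 => v ∈ Δ i).card = 1) ∧
      -- a₂, b₂, c₂ each appear in exactly two of the Δ i
      (∀ v : Fin 7, v ∈ ({1, 3, 5} : Finset (Fin 7)) →
        (Finset.univ.filter fun i : Fin 4 => v ∈ Δ i).card = 2) := by
  obtain ⟨a, b, c, e, q, hq⟩ := BU.main x
  exact ⟨BU.DD a b c e, BU.DD_rainbow a b c e, ⟨q, hq⟩, BU.DD_one a b c e, BU.DD_two a b c e⟩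
end

section
/- The multiple chessboard complex Δ_{2,4}^{1;L} (rook placements on a 2×4 board with at most one rook per row, at most one rook in column 2, and at most two rooks in column 1) is a triangulation of the 2-sphere; in particular it is a closed 2-manifold and is simply connected. -/
open scoped Classical

/-- The multiple chessboard complex `Δ_{2,4}^{𝟙;𝕃}`: a set of cells of the `2 × 4`
board (first coordinate = column, second coordinate = row) is a simplex iff each of
the four rows contains at most one cell, column `1` contains at most one cell, and
column `0` contains at most two cells. -/
def IsChessSimplex (S : Finset (Fin 2 × Fin 4)) : Prop :=
  (∀ j : Fin 4, (S.filter fun c => c.2 = j).card ≤ 1) ∧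
  (S.filter fun c => c.1 = 1).card ≤ 1 ∧
  (S.filter fun c => c.1 = 0).card ≤ 2

/-- The geometric realization of `Δ_{2,4}^{𝟙;𝕃}` inside the standard simplex on the
vertex set `[2] × [4]`: the points whose support is a simplex of the complex. -/
def chessRealization : Set ((Fin 2 × Fin 4) → ℝ) :=
  {x ∈ stdSimplex ℝ (Fin 2 × Fin 4) |
    IsChessSimplex (Finset.univ.filter fun v => x v ≠ 0)}


abbrev E3 := EuclideanSpace ℝ (Fin 3)
abbrev S2 := Metric.sphere (0 : E3) 1

section
open scoped unitInterval

theorem S2_compl_simplyConnected (v : S2) : IsSimplyConnected ({v}ᶜ : Set S2) := by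
  have hv : ‖(v : E3)‖ = 1 := norm_eq_of_mem_sphere v
  have h := (isOpenEmbedding_stereographic_symm hv).isEmbedding
  have h2 := range_stereographic_symm hv
  have : IsSimplyConnected (Set.univ : Set ((ℝ ∙ (v : E3))ᗮ)) := by
    have : ContractibleSpace (Set.univ : Set ((ℝ ∙ (v : E3))ᗮ)) :=
      (Homeomorph.Set.univ _).contractibleSpace
    exact SimplyConnectedSpace.ofContractible _
  rw [← h.isSimplyConnected_image, Set.image_univ, h2] at this
  exact this

noncomputable def nrm (y : E3) (hy : y ≠ 0) : S2 :=
  ⟨‖y‖⁻¹ • y, by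
    have := norm_ne_zero_iff.2 hy
    simp [norm_smul, this]⟩

theorem nrm_cont {X : Type*} [TopologicalSpace X] (f : X → E3) (hf : Continuous f)
    (h : ∀ x, f x ≠ 0) : Continuous fun x => nrm (f x) (h x) := by
  unfold nrm
  refine Continuous.subtype_mk ?_ _
  exact (hf.norm.inv₀ fun x => norm_ne_zero_iff.2 (h x)).smul hf

theorem nrm_self (y : S2) (hy : (y : E3) ≠ 0) : nrm y hy = y := by
  apply Subtype.ext
  simp [nrm]

theorem bern_contDiff (n : ℕ) (f : C(I, E3)) :
    ∃ p : ℝ → E3, ContDiff ℝ 1 p ∧ ∀ t : I, p t = bernsteinApproximation n f t := by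
  refine ⟨fun t => ∑ k : Fin (n+1),
    ((n.choose k : ℝ) * t ^ (k : ℕ) * (1 - t) ^ (n - k : ℕ)) • f (bernstein.z k), ?_, ?_⟩
  · fun_prop
  · intro t
    simp [bernsteinApproximation.apply, bernstein_apply]

theorem S2_loop {x : S2} (γ : Path x x) : γ.Homotopic (Path.refl x) := by
  let f : C(I, E3) := ⟨fun t => (γ t : E3), by fun_prop⟩
  obtain ⟨n, hn0, hn⟩ : ∃ n, n ≠ 0 ∧ dist (bernsteinApproximation n f) f < 1 := by
    have := (Metric.tendsto_nhds.1 (bernsteinApproximation_uniform f)) 1 one_pos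
    obtain ⟨n, h1, h2⟩ := (this.and (Filter.eventually_ne_atTop 0)).exists
    exact ⟨n, h2, h1⟩
  set g : C(I, E3) := bernsteinApproximation n f with hg
  have hg0 : g 0 = x := by simp [hg, f]
  have hg1 : g 1 = x := by simp [hg, bernsteinApproximation.apply_one hn0, f]
  have hd : ∀ t, ‖g t - γ t‖ < 1 := fun t => by
    rw [← dist_eq_norm]
    exact (ContinuousMap.dist_apply_le_dist (f := g) (g := f) t).trans_lt hn
  let h : I × I → E3 := fun q => (γ q.2 : E3) + (q.1 : ℝ) • (g q.2 - γ q.2)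
  have hc : Continuous h := by fun_prop
  have hne : ∀ q, h q ≠ 0 := by
    intro q h0
    have h1 : ‖(γ q.2 : E3)‖ = 1 := norm_eq_of_mem_sphere _
    have h2 : (γ q.2 : E3) = - ((q.1 : ℝ) • (g q.2 - γ q.2)) := eq_neg_of_add_eq_zero_left h0
    rw [h2, norm_neg, norm_smul, Real.norm_of_nonneg q.1.2.1] at h1
    have := hd q.2
    have h3 := q.1.2.2
    have h4 := q.1.2.1
    have := norm_nonneg (g q.2 - γ q.2)
    nlinarith
  have hgne : ∀ t, g t ≠ 0 := fun t => by simpa [h] using hne (1, t)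
  let δ : Path x x :=
    { toFun := fun t => nrm (g t) (hgne t)
      continuous_toFun := nrm_cont _ g.continuous _
      source' := by simp [hg0, nrm_self]
      target' := by simp [hg1, nrm_self] }
  have H : γ.Homotopic δ := ⟨
    { toFun := fun q => nrm (h q) (hne q)
      continuous_toFun := nrm_cont _ hc _
      map_zero_left := fun t => by simp [h, nrm_self]
      map_one_left := fun t => by simp [h, δ]
      prop' := by
        rintro t y (rfl | rfl)
        · simp [h, hg0, nrm_self]
        · simp [h, hg1, nrm_self] }⟩
  refine H.trans ?_
  obtain ⟨p, hp, hpg⟩ := bern_contDiff n f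
  have hD : Dense (Set.range fun q : ℝ × ℝ => q.1 • p q.2)ᶜ := by
    apply ContDiff.dense_compl_range_of_finrank_lt_finrank
    · fun_prop
    · simp
  obtain ⟨v, hv⟩ := hD.nonempty
  have hv0 : v ≠ 0 := by
    rintro rfl
    exact hv ⟨(0, 0), by simp⟩
  have hmiss : ∀ t, δ t ∈ ({nrm v hv0}ᶜ : Set S2) := by
    intro t ht
    have ht : nrm (g t) (hgne t) = nrm v hv0 := ht
    have := congrArg Subtype.val ht
    simp only [nrm] at this
    apply hv
    refine ⟨(‖v‖ * ‖g t‖⁻¹, t), ?_⟩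
    simp only [hpg]
    rw [mul_smul, this, smul_smul, mul_inv_cancel₀ (norm_ne_zero_iff.2 hv0), one_smul]
  obtain ⟨F, -⟩ := (isSimplyConnected_iff_exists_homotopy_refl_forall_mem.1
    (S2_compl_simplyConnected (nrm v hv0))).2 x δ hmiss
  exact ⟨F⟩

theorem S2_simplyConnected : SimplyConnectedSpace S2 := by
  rw [simply_connected_iff_loops_nullhomotopic]
  refine ⟨?_, fun x γ => S2_loop γ⟩
  rw [← isPathConnected_iff_pathConnectedSpace]
  apply isPathConnected_sphere _ _ zero_le_one
  rw [← Module.finrank_eq_rank]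
  simp

end

/-- Coordinate description of the simplices of the complex. -/
structure ChessCoord (x : Fin 2 × Fin 4 → ℝ) : Prop where
  row : ∀ j, x (0, j) = 0 ∨ x (1, j) = 0
  colB : ∀ i j, i = j ∨ x (1, i) = 0 ∨ x (1, j) = 0
  colA : ∀ i j k, i = j ∨ i = k ∨ j = k ∨ x (0, i) = 0 ∨ x (0, j) = 0 ∨ x (0, k) = 0

theorem chess_iff (x : Fin 2 × Fin 4 → ℝ) :
    IsChessSimplex (Finset.univ.filter fun v => x v ≠ 0) ↔ ChessCoord x := by
  unfold IsChessSimplex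
  constructor
  · rintro ⟨h1, h2, h3⟩
    refine ⟨fun j => ?_, fun i j => ?_, fun i j k => ?_⟩
    · by_contra! h
      have := Finset.card_le_one.1 (h1 j) (0, j) (by simp [h.1]) (1, j) (by simp [h.2])
      simp at this
    · by_contra! h
      have := Finset.card_le_one.1 h2 (1, i) (by simp [h.2.1]) (1, j) (by simp [h.2.2])
      exact h.1 (by simpa using this)
    · by_contra! h
      obtain ⟨a1, a2, a3, a4, a5, a6⟩ := h
      refine absurd h3 (not_le.2 (Finset.two_lt_card.2
        ⟨(0, i), ?_, (0, j), ?_, (0, k), ?_, ?_⟩)) <;> simp [*]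
  · rintro ⟨h1, h2, h3⟩
    refine ⟨fun j => ?_, ?_, ?_⟩
    · rw [Finset.card_le_one]
      rintro ⟨a, i⟩ ha ⟨b, k⟩ hb
      simp only [Finset.mem_filter, Finset.mem_univ, true_and] at ha hb
      obtain ⟨ha, rfl⟩ := ha
      obtain ⟨hb, rfl⟩ := hb
      have := h1 k
      fin_cases a <;> fin_cases b <;> simp at ha hb ⊢ <;> tauto
    · rw [Finset.card_le_one]
      rintro ⟨a, i⟩ ha ⟨b, k⟩ hb
      simp only [Finset.mem_filter, Finset.mem_univ, true_and] at ha hb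
      obtain ⟨ha, rfl⟩ := ha
      obtain ⟨hb, rfl⟩ := hb
      have := h2 i k
      simp_all
    · by_contra! h
      obtain ⟨⟨a, i⟩, ha, ⟨b, j⟩, hb, ⟨c, k⟩, hc, hab, hac, hbc⟩ := Finset.two_lt_card.1 h
      simp only [Finset.mem_filter, Finset.mem_univ, true_and] at ha hb hc
      obtain ⟨ha, rfl⟩ := ha
      obtain ⟨hb, rfl⟩ := hb
      obtain ⟨hc, rfl⟩ := hc
      have := h3 i j k
      simp_all

theorem mem_chess (x : Fin 2 × Fin 4 → ℝ) :
    x ∈ chessRealization ↔ x ∈ stdSimplex ℝ (Fin 2 × Fin 4) ∧ ChessCoord x := by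
  rw [← chess_iff]; rfl

theorem chess_compact : IsCompact chessRealization := by
  have : chessRealization = stdSimplex ℝ (Fin 2 × Fin 4) ∩ {x | ChessCoord x} := by
    ext x; exact mem_chess x
  rw [this]
  refine (isCompact_stdSimplex ℝ _).inter_right ?_
  have : {x : Fin 2 × Fin 4 → ℝ | ChessCoord x} =
      {x | ∀ j, x (0, j) * x (1, j) = 0} ∩ {x | ∀ i j, i = j ∨ x (1, i) * x (1, j) = 0} ∩
      {x | ∀ i j k, (i = j ∨ i = k ∨ j = k) ∨ x (0, i) * x (0, j) * x (0, k) = 0} := by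
    ext x
    constructor
    · rintro ⟨h1, h2, h3⟩
      refine ⟨⟨?_, ?_⟩, ?_⟩
      · intro j; simpa using h1 j
      · intro i j; simpa using h2 i j
      · intro i j k; simpa [or_assoc] using h3 i j k
    · rintro ⟨⟨h1, h2⟩, h3⟩
      refine ⟨?_, ?_, ?_⟩
      · intro j; simpa using h1 j
      · intro i j; simpa using h2 i j
      · intro i j k; simpa [or_assoc] using h3 i j k
  rw [this]
  refine IsClosed.inter (IsClosed.inter ?_ ?_) ?_
  · simp only [Set.ofPred_forall]
    refine isClosed_iInter fun j => isClosed_eq (by fun_prop) (by fun_prop)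
  · simp only [Set.ofPred_forall, Set.ofPred_or]
    refine isClosed_iInter fun i => isClosed_iInter fun j => isClosed_const.union ?_
    exact isClosed_eq (by fun_prop) (by fun_prop)
  · simp only [Set.ofPred_forall, Set.ofPred_or (p := fun _ => _ ∨ _)]
    refine isClosed_iInter fun i => isClosed_iInter fun j => isClosed_iInter fun k =>
      isClosed_const.union ?_
    exact isClosed_eq (by fun_prop) (by fun_prop)

theorem chess_unique {x x' : Fin 2 × Fin 4 → ℝ} (hx : ∀ v, 0 ≤ x v) (hx' : ∀ v, 0 ≤ x' v)
    (h : ChessCoord x) (h' : ChessCoord x') (r c : ℝ) (hr : 0 ≤ r)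
    (e : ∀ i, x (0, i) - x (1, i) = r * (x' (0, i) - x' (1, i)) + c) : x = r • x' := by
  have hc1 : ¬ 0 < c := by
    intro hc
    have key : ∀ i, x' (1, i) = 0 → x (0, i) ≠ 0 := by
      intro i hi h0
      have := e i
      rw [hi, h0] at this
      have := mul_nonneg hr (hx' (0, i))
      have := hx (1, i)
      linarith
    obtain ⟨j, hj⟩ : ∃ j, ∀ i, i ≠ j → x' (1, i) = 0 := by
      by_cases hh : ∃ j, x' (1, j) ≠ 0
      · obtain ⟨j, hj⟩ := hh
        refine ⟨j, fun i hi => ?_⟩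
        have := h'.colB i j
        tauto
      · push Not at hh
        exact ⟨0, fun i _ => hh i⟩
    have : ∃ a b c : Fin 4, a ≠ j ∧ b ≠ j ∧ c ≠ j ∧ a ≠ b ∧ a ≠ c ∧ b ≠ c := by
      clear hj; revert j; decide
    obtain ⟨a, b, c, h1, h2, h3, h4, h5, h6⟩ := this
    have := h.colA a b c
    have := key a (hj a h1)
    have := key b (hj b h2)
    have := key c (hj c h3)
    tauto
  have hc2 : ¬ c < 0 := by
    intro hc
    have key : ∀ i, x' (0, i) = 0 → x (1, i) ≠ 0 := by
      intro i hi h0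
      have := e i
      rw [hi, h0] at this
      have := mul_nonneg hr (hx' (1, i))
      have := hx (0, i)
      linarith
    have b01 := h.colB 0 1
    have b02 := h.colB 0 2
    have b03 := h.colB 0 3
    have b12 := h.colB 1 2
    have b13 := h.colB 1 3
    have b23 := h.colB 2 3
    have a012 := h'.colA 0 1 2
    have a013 := h'.colA 0 1 3
    have a023 := h'.colA 0 2 3
    have a123 := h'.colA 1 2 3
    have k0 := key 0
    have k1 := key 1
    have k2 := key 2
    have k3 := key 3
    simp at b01 b02 b03 b12 b13 b23 a012 a013 a023 a123
    grind
  have hc : c = 0 := le_antisymm (not_lt.1 hc1) (not_lt.1 hc2)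
  subst hc
  have main : ∀ i, x (0, i) = r * x' (0, i) ∧ x (1, i) = r * x' (1, i) := by
    intro i
    have e := e i
    have p0 := hx (0, i)
    have p1 := hx (1, i)
    have q0 := mul_nonneg hr (hx' (0, i))
    have q1 := mul_nonneg hr (hx' (1, i))
    rcases h.row i with h1 | h1 <;> rcases h'.row i with h2 | h2 <;> simp only [h1, h2] at * <;>
      constructor <;> linarith
  funext ⟨a, i⟩
  fin_cases a
  · exact (main i).1
  · exact (main i).2

/-- The linear map taking the eight vertices of the complex to the vertices of a cube. -/
noncomputable def cubeMap (x : Fin 2 × Fin 4 → ℝ) : E3 :=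
  !₂[(x (0,0) - x (1,0)) + (x (0,1) - x (1,1)) - (x (0,2) - x (1,2)) - (x (0,3) - x (1,3)),
     (x (0,0) - x (1,0)) - (x (0,1) - x (1,1)) + (x (0,2) - x (1,2)) - (x (0,3) - x (1,3)),
     (x (0,0) - x (1,0)) - (x (0,1) - x (1,1)) - (x (0,2) - x (1,2)) + (x (0,3) - x (1,3))]

theorem cubeMap_continuous : Continuous cubeMap := by
  unfold cubeMap
  refine (PiLp.continuous_toLp 2 _).comp ?_
  refine continuous_pi fun i => ?_
  fin_cases i <;> simp <;> fun_prop

theorem cubeMap_smul (r : ℝ) (x : Fin 2 × Fin 4 → ℝ) : cubeMap (r • x) = r • cubeMap x := by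
  ext i
  fin_cases i <;> simp [cubeMap] <;> ring

theorem cubeMap_unique {x x' : Fin 2 × Fin 4 → ℝ} (hx : ∀ v, 0 ≤ x v) (hx' : ∀ v, 0 ≤ x' v)
    (h : ChessCoord x) (h' : ChessCoord x') (r : ℝ) (hr : 0 ≤ r)
    (e : cubeMap x = r • cubeMap x') : x = r • x' := by
  refine chess_unique hx hx' h h' r
    ((x (0,0) - x (1,0)) - r * (x' (0,0) - x' (1,0))) hr ?_
  have e0 := congrArg (fun y : E3 => y 0) e
  have e1 := congrArg (fun y : E3 => y 1) e
  have e2 := congrArg (fun y : E3 => y 2) e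
  simp [cubeMap] at e0 e1 e2
  intro i
  fin_cases i <;> simp <;> linarith

theorem cubeMap_ne_zero {x : Fin 2 × Fin 4 → ℝ} (hx : x ∈ chessRealization) :
    cubeMap x ≠ 0 := by
  intro h0
  rw [mem_chess] at hx
  have := cubeMap_unique hx.1.1 hx.1.1 hx.2 hx.2 0 le_rfl (by simpa using h0)
  rw [zero_smul] at this
  have h1 := hx.1.2
  simp [this] at h1

theorem cubeMap_surj (y : E3) :
    ∃ x : Fin 2 × Fin 4 → ℝ, (∀ v, 0 ≤ x v) ∧ ChessCoord x ∧ cubeMap x = y := by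
  let t : Fin 4 → ℝ := ![(y 0 + y 1 + y 2) / 4, (y 0 - y 1 - y 2) / 4,
    (- y 0 + y 1 - y 2) / 4, (- y 0 - y 1 + y 2) / 4]
  obtain ⟨p, hp⟩ := Finite.exists_min t
  obtain ⟨q, hqp, hq⟩ : ∃ q, q ≠ p ∧ ∀ i, i ≠ p → t q ≤ t i := by
    obtain ⟨q, hq, hq'⟩ := Finset.exists_min_image (Finset.univ.erase p) t
      (Finset.card_pos.1 (by simp))
    exact ⟨q, by simpa using hq, fun i hi => hq' i (by simpa using hi)⟩
  let x : Fin 2 × Fin 4 → ℝ := fun v => if v.1 = 0 then max (t v.2 - t q) 0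
    else max (t q - t v.2) 0
  have x0 : ∀ i, x (0, i) = max (t i - t q) 0 := fun i => by simp [x]
  have x1 : ∀ i, x (1, i) = max (t q - t i) 0 := fun i => by simp [x]
  have xs : ∀ i, x (0, i) - x (1, i) = t i - t q := by
    intro i
    rw [x0, x1]
    rcases le_total (t i) (t q) with h | h
    · rw [max_eq_right (by linarith), max_eq_left (by linarith)]; ring
    · rw [max_eq_left (by linarith), max_eq_right (by linarith)]; ring
  have bz : ∀ i, i ≠ p → x (1, i) = 0 := fun i hi => by
    rw [x1]; exact max_eq_right (by linarith [hq i hi])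
  have azq : x (0, q) = 0 := by rw [x0]; simp
  have azp : x (0, p) = 0 := by rw [x0]; exact max_eq_right (by linarith [hp q])
  refine ⟨x, ?_, ⟨?_, ?_, ?_⟩, ?_⟩
  · intro v
    simp only [x]
    split <;> exact le_max_right _ _
  · intro j
    by_cases hj : j = p
    · subst hj; exact Or.inl azp
    · exact Or.inr (bz j hj)
  · intro i j
    by_cases hi : i = p
    · by_cases hj : j = p
      · left; rw [hi, hj]
      · exact Or.inr (Or.inr (bz j hj))
    · exact Or.inr (Or.inl (bz i hi))
  · intro i j k
    have comb : ∀ p q i j k : Fin 4, q ≠ p → (i = j ∨ i = k ∨ j = k ∨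
      (i = p ∨ i = q) ∨ (j = p ∨ j = q) ∨ (k = p ∨ k = q)) := by decide
    have az : ∀ i, (i = p ∨ i = q) → x (0, i) = 0 := by
      rintro i (rfl | rfl) <;> assumption
    have a1 := az i
    have a2 := az j
    have a3 := az k
    have := comb p q i j k hqp
    tauto
  · ext i
    fin_cases i <;> simp [cubeMap, xs, t] <;> ring

/-- Radial projection of the cube picture onto the round sphere. -/
noncomputable def chessToSphere (x : chessRealization) : S2 :=
  nrm (cubeMap x) (cubeMap_ne_zero x.2)

theorem chessToSphere_continuous : Continuous chessToSphere :=
  nrm_cont _ (cubeMap_continuous.comp continuous_subtype_val) _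

theorem chessToSphere_injective : Function.Injective chessToSphere := by
  intro x x' h
  have h := congrArg Subtype.val h
  simp only [chessToSphere, nrm] at h
  have hx := (mem_chess _).1 x.2
  have hx' := (mem_chess _).1 x'.2
  have hn := norm_ne_zero_iff.2 (cubeMap_ne_zero x.2)
  have e : cubeMap x = (‖cubeMap x‖ * ‖cubeMap x'‖⁻¹) • cubeMap x' := by
    rw [mul_smul, ← h, smul_smul, mul_inv_cancel₀ hn, one_smul]
  have := cubeMap_unique hx.1.1 hx'.1.1 hx.2 hx'.2 _ (by positivity) e
  have s := hx.1.2
  rw [this] at s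
  simp only [Pi.smul_apply, smul_eq_mul, ← Finset.mul_sum, hx'.1.2, mul_one] at s
  rw [s, one_smul] at this
  exact Subtype.ext this

theorem chessToSphere_surjective : Function.Surjective chessToSphere := by
  intro y
  obtain ⟨x, hx, hc, e⟩ := cubeMap_surj y
  have hy : ‖(y : E3)‖ = 1 := norm_eq_of_mem_sphere y
  have hs : 0 < ∑ v, x v := by
    refine lt_of_le_of_ne (Finset.sum_nonneg fun v _ => hx v) fun h0 => ?_
    have := (Finset.sum_eq_zero_iff_of_nonneg fun v _ => hx v).1 h0.symm
    have hx0 : x = (0 : ℝ) • x := by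
      funext v; simpa using this v (Finset.mem_univ v)
    rw [hx0, cubeMap_smul, zero_smul] at e
    rw [← e] at hy
    simp at hy
  set s := ∑ v, x v
  have hmem : s⁻¹ • x ∈ chessRealization := by
    rw [mem_chess]
    refine ⟨⟨fun v => mul_nonneg (inv_nonneg.2 hs.le) (hx v), ?_⟩, ⟨?_, ?_, ?_⟩⟩
    · simp only [Pi.smul_apply, smul_eq_mul, ← Finset.mul_sum]
      exact inv_mul_cancel₀ hs.ne'
    · intro j; simpa [hs.ne'] using hc.row j
    · intro i j; simpa [hs.ne'] using hc.colB i j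
    · intro i j k; simpa [hs.ne'] using hc.colA i j k
  refine ⟨⟨_, hmem⟩, Subtype.ext ?_⟩
  simp only [chessToSphere, nrm, cubeMap_smul, e, norm_smul, hy, mul_one, norm_inv,
    Real.norm_of_nonneg hs.le, inv_inv, smul_smul, mul_inv_cancel₀ hs.ne', one_smul]

theorem chess_homeo : Nonempty (chessRealization ≃ₜ S2) := by
  have : CompactSpace chessRealization := isCompact_iff_compactSpace.1 chess_compact
  exact ⟨Continuous.homeoOfEquivCompactToT2
    (f := Equiv.ofBijective chessToSphere ⟨chessToSphere_injective, chessToSphere_surjective⟩)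
    chessToSphere_continuous⟩

/-- **Lemma 2.4** (`lema:small-Bier`): the multiple chessboard complex
`Δ_{2,4}^{𝟙;𝕃}` is a triangulation of the `2`-sphere: its geometric realization is
homeomorphic to `S²`; in particular it is a closed `2`-manifold and simply connected. -/
theorem chessboard_is_two_sphere :
    Nonempty (chessRealization ≃ₜ Metric.sphere (0 : EuclideanSpace ℝ (Fin 3)) 1) ∧
    SimplyConnectedSpace chessRealization := by
  obtain ⟨e⟩ := chess_homeo
  have := S2_simplyConnected
  exact ⟨⟨e⟩, e.toHomotopyEquiv.simplyConnectedSpace⟩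
end
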